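/- Let G be a Borel probability measure on ℝ, let α ∈ (0,1), let φ(x) = (2π)^{−1/2} exp(−x²/2), and define f(z) = ∫_{ℝ} φ(z − ν) dG(ν). If f′(z) = −α z f(z) for all z ∈ ℝ (equivalently, the posterior mean z + f′(z)/f(z) equals (1 − α)z for all z), then G is the Gaussian measure N(0, (1 − α)/α). -/

import Mathlib

open Real MeasureTheory ProbabilityTheory

lemma aux_hasDeriv_phi (x : ℝ) :
    HasDerivAt (fun x : ℝ => (√(2 * π))⁻¹ * rexp (-(x ^ 2) / 2))
      (-x * ((√(2 * π))⁻¹ * rexp (-(x ^ 2) / 2))) x := by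
  have h : HasDerivAt (fun x : ℝ => -(x ^ 2) / 2) (-x) x := by
    have := ((hasDerivAt_pow 2 x).neg).div_const 2
    refine this.congr_deriv ?_
    norm_num
    ring
  refine (h.exp.const_mul _).congr_deriv ?_
  ring

lemma aux_bound (x : ℝ) :
    ‖-x * ((√(2 * π))⁻¹ * rexp (-(x ^ 2) / 2))‖ ≤ (√(2 * π))⁻¹ := by
  have hc : 0 ≤ (√(2 * π))⁻¹ := by positivity
  have h1 : |x| * rexp (-(x ^ 2) / 2) ≤ 1 := by
    have h2 : |x| ≤ rexp (x ^ 2 / 2) := by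
      have := Real.add_one_le_exp (x ^ 2 / 2)
      nlinarith [sq_nonneg (|x| - 1), sq_abs x]
    rw [neg_div, Real.exp_neg]
    have := Real.exp_pos (x ^ 2 / 2)
    rw [← div_eq_mul_inv, div_le_one this]
    exact h2
  rw [norm_mul, norm_mul, norm_neg, Real.norm_eq_abs, Real.norm_eq_abs, Real.norm_eq_abs,
    abs_of_nonneg hc, abs_of_pos (Real.exp_pos _)]
  nlinarith

lemma aux_int (G : Measure ℝ) [IsProbabilityMeasure G] (z : ℝ) :
    Integrable (fun ν => (√(2 * π))⁻¹ * rexp (-((z - ν) ^ 2) / 2)) G := by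
  refine Integrable.of_bound (C := (√(2 * π))⁻¹) (by fun_prop) (ae_of_all _ fun ν => ?_)
  have hc : 0 ≤ (√(2 * π))⁻¹ := by positivity
  have : rexp (-((z - ν) ^ 2) / 2) ≤ 1 := by
    rw [Real.exp_le_one_iff]
    nlinarith [sq_nonneg (z - ν)]
  rw [Real.norm_of_nonneg (by positivity)]
  nlinarith

lemma aux_diff (G : Measure ℝ) [IsProbabilityMeasure G] :
    Differentiable ℝ (fun z => ∫ ν, (√(2 * π))⁻¹ * rexp (-((z - ν) ^ 2) / 2) ∂G) := by
  intro z
  refine (hasDerivAt_integral_of_dominated_loc_of_deriv_le (μ := G) (s := Set.univ)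
    (F := fun z ν => (√(2 * π))⁻¹ * rexp (-((z - ν) ^ 2) / 2))
    (F' := fun z ν => -(z - ν) * ((√(2 * π))⁻¹ * rexp (-((z - ν) ^ 2) / 2)))
    (bound := fun _ => (√(2 * π))⁻¹) (x₀ := z) Filter.univ_mem ?_ (aux_int G z) (by fun_prop) ?_
    (integrable_const _) ?_).2.differentiableAt
  · exact Filter.Eventually.of_forall fun z => by fun_prop
  · exact ae_of_all _ fun ν x _ => aux_bound (x - ν)
  · refine ae_of_all _ fun ν x _ => ?_
    exact (aux_hasDeriv_phi (x - ν)).comp_sub_const x ν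

lemma aux_conv (G : Measure ℝ) [IsProbabilityMeasure G] :
    G ∗ gaussianReal 0 1 = volume.withDensity
      (fun z => ENNReal.ofReal (∫ ν, (√(2 * π))⁻¹ * rexp (-((z - ν) ^ 2) / 2) ∂G)) := by
  have key : ∀ z, ENNReal.ofReal (∫ ν, (√(2 * π))⁻¹ * rexp (-((z - ν) ^ 2) / 2) ∂G)
      = ∫⁻ ν, gaussianPDF ν 1 z ∂G := by
    intro z
    rw [ofReal_integral_eq_lintegral_ofReal (aux_int G z)
      (ae_of_all _ fun ν => by positivity)]
    refine lintegral_congr fun ν => ?_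
    simp [gaussianPDF, gaussianPDFReal]
  have hm : Measurable (Function.uncurry fun (z ν : ℝ) => gaussianPDF ν 1 z) := by
    unfold gaussianPDF gaussianPDFReal
    fun_prop
  simp_rw [key]
  ext s hs
  rw [withDensity_apply _ hs, lintegral_lintegral_swap hm.aemeasurable,
    ← lintegral_indicator_one hs, Measure.lintegral_conv (measurable_one.indicator hs)]
  refine lintegral_congr fun ν => ?_
  rw [← gaussianReal_apply ν one_ne_zero s]
  have h := gaussianReal_map_const_add (μ := 0) (v := 1) ν
  rw [zero_add] at h
  rw [← h, ← lintegral_indicator_one hs,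
    lintegral_map (measurable_one.indicator hs) (by fun_prop)]

theorem linear_posterior_mean_implies_gaussian_prior
    (G : Measure ℝ) [IsProbabilityMeasure G]
    (α : ℝ) (hα : α ∈ Set.Ioo (0 : ℝ) 1)
    (φ f : ℝ → ℝ)
    (hφ : ∀ x, φ x = (Real.sqrt (2 * Real.pi))⁻¹ * Real.exp (-(x ^ 2) / 2))
    (hf : ∀ z, f z = ∫ ν, φ (z - ν) ∂G)
    (hode : ∀ z, deriv f z = -α * z * f z) :
    G = gaussianReal 0 (((1 - α) / α).toNNReal) := by
  obtain ⟨h0, h1⟩ := hα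
  have hff : f = fun z => ∫ ν, (√(2 * π))⁻¹ * rexp (-((z - ν) ^ 2) / 2) ∂G := by
    funext z
    rw [hf]
    simp_rw [hφ]
  have hd : Differentiable ℝ f := hff ▸ aux_diff G
  have hsol : ∀ z, f z = f 0 * rexp (-(α * z ^ 2) / 2) := by
    have hg : ∀ z, HasDerivAt (fun z => f z * rexp (α * z ^ 2 / 2)) 0 z := by
      intro z
      have h : HasDerivAt (fun z : ℝ => α * z ^ 2 / 2) (α * z) z := by
        refine (((hasDerivAt_pow 2 z).const_mul α).div_const 2).congr_deriv ?_
        norm_num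
        ring
      refine ((hd z).hasDerivAt.mul h.exp).congr_deriv ?_
      rw [hode]
      ring
    intro z
    have := is_const_of_deriv_eq_zero (fun z => (hg z).differentiableAt)
      (fun z => (hg z).deriv) z 0
    simp only [ne_eq, OfNat.ofNat_ne_zero, not_false_eq_true, zero_pow, mul_zero, zero_div,
      Real.exp_zero, mul_one] at this
    rw [← this, mul_assoc, ← Real.exp_add]
    ring_nf
    simp
  have hv : (α⁻¹).toNNReal ≠ 0 := by
    simpa using h0
  have hvc : (((α⁻¹).toNNReal : NNReal) : ℝ) = α⁻¹ := Real.coe_toNNReal _ (by positivity)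
  have hf0 : 0 ≤ f 0 := by
    rw [hff]
    exact integral_nonneg fun ν => by positivity
  obtain ⟨c, hc⟩ : ∃ c : ENNReal,
      G ∗ gaussianReal 0 1 = c • gaussianReal 0 (α⁻¹).toNNReal := by
    refine ⟨ENNReal.ofReal (f 0 * √(2 * π * α⁻¹)), ?_⟩
    rw [aux_conv, gaussianReal_of_var_ne_zero _ hv,
      ← withDensity_smul _ (measurable_gaussianPDF _ _)]
    congr 1
    funext z
    rw [← congrFun hff z, hsol z, Pi.smul_apply, smul_eq_mul, gaussianPDF,
      ← ENNReal.ofReal_mul (by positivity), gaussianPDFReal, hvc]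
    congr 1
    have : √(2 * π * α⁻¹) ≠ 0 := by positivity
    field_simp
    congr 1
    simp
  have hc1 : c = 1 := by
    have := congrArg (fun μ => μ Set.univ) hc
    simpa using this.symm
  rw [hc1, one_smul] at hc
  refine Measure.ext_of_charFun ?_
  funext t
  have h := congrArg (fun μ => charFun μ t) hc
  simp only [charFun_conv, charFun_gaussianReal, hvc] at h
  rw [charFun_gaussianReal, Real.coe_toNNReal _ (div_nonneg (by linarith) h0.le)]
  refine mul_right_cancel₀ (Complex.exp_ne_zero _) (h.trans ?_)
  rw [← Complex.exp_add]
  congr 1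
  have : (α : ℂ) ≠ 0 := by exact_mod_cast h0.ne'
  push_cast
  field_simp
  ring
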